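/- Fix k ≠ l. There exist finitely many finite compositions Ξ_1, …, Ξ_r of Demazure operators taken from {D_k, D_l} and polynomials c_1, …, c_r ∈ ℂ[α_k, α_l] ⊆ A such that c_1·Ξ_1(Δ_{k,l}) + ⋯ + c_r·Ξ_r(Δ_{k,l}) = 1. -/

import Mathlib

open scoped TensorProduct

noncomputable section

abbrev Vd (d : ℕ) := Fin d → ℂ
abbrev Ad (d : ℕ) := MvPolynomial (Fin d) ℂ

/-- Action of `g ∈ GL(V)` on polynomials: substitute `X j ↦ (g⁻¹ x)_j`. -/
def glAct {d : ℕ} (g : GL (Fin d) ℂ) : Ad d →ₐ[ℂ] Ad d :=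
  MvPolynomial.aeval fun j =>
    ∑ k, ((g⁻¹ : GL (Fin d) ℂ) : Matrix (Fin d) (Fin d) ℂ) j k • MvPolynomial.X k

/-- Embedding of linear forms on `V` as degree-one polynomials. -/
def lin {d : ℕ} (θ : Vd d →ₗ[ℂ] ℂ) : Ad d :=
  ∑ j, θ (Pi.single j 1) • MvPolynomial.X j

structure CoxeterSetup (d n : ℕ) where
  Γ : Subgroup (GL (Fin d) ℂ)
  finite : Finite Γ
  s : Fin n → Γ
  gen : Subgroup.closure (Set.range s) = (⊤ : Subgroup Γ)
  α : Fin n → (Vd d →ₗ[ℂ] ℂ)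
  coroot : Fin n → Vd d
  pairing : ∀ i, α i (coroot i) = 2
  refl : ∀ i (v : Vd d),
    ((s i : GL (Fin d) ℂ) : Matrix (Fin d) (Fin d) ℂ).mulVec v = v - α i v • coroot i


/-- The subalgebra of `Γ'`-invariant polynomials. -/
def FixedSub {d n : ℕ} (S : CoxeterSetup d n) (Γ' : Subgroup S.Γ) : Subalgebra ℂ (Ad d) where
  carrier := {f | ∀ g ∈ Γ', glAct (g : GL (Fin d) ℂ) f = f}
  mul_mem' := fun hf hg g hgmem => by simp [map_mul, hf g hgmem, hg g hgmem]
  add_mem' := fun hf hg g hgmem => by simp [map_add, hf g hgmem, hg g hgmem]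
  algebraMap_mem' := fun c g _ => by simp

/-- `M` (with `Γ'`-action `ρ`) descends to `A^{Γ'}`. -/
def Descends {d n : ℕ} (S : CoxeterSetup d n) (Γ' : Subgroup S.Γ) (M : Type)
    [AddCommGroup M] [Module ℂ M] [Module (Ad d) M] [IsScalarTower ℂ (Ad d) M]
    (ρ : Γ' →* Module.End ℂ M) : Prop :=
  ∃ (N : Type) (_ : AddCommGroup N) (_ : Module (FixedSub S Γ') N)
    (e : ((Ad d) ⊗[FixedSub S Γ'] N) ≃ₗ[Ad d] M),
    ∀ (g : Γ') (a : Ad d) (x : N),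
      ρ g (e (a ⊗ₜ x)) = e ((glAct ((g : S.Γ) : GL (Fin d) ℂ) a) ⊗ₜ x)


/-- Alternating product `x·y·x·⋯` with `m` factors, starting with `x`. -/
def altProd {M : Type*} [Monoid M] (x y : M) : ℕ → M
  | 0 => 1
  | (j + 1) => x * altProd y x j

/-- The order `m_{ij}` of `sᵢ sⱼ` in `Γ`. -/
def mOrd {d n : ℕ} (S : CoxeterSetup d n) (i j : Fin n) : ℕ :=
  orderOf (S.s i * S.s j)

/-- Relations presenting the Demazure descent algebra `𝔇`: the inclusion of `A` is a
`ℂ`-algebra map, `Gᵢ² = 0`, and `Gᵢ·θ = θ(αᵢ^∨) + sᵢ(θ)·Gᵢ` for linear forms `θ`. -/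
inductive DRel {d n : ℕ} (S : CoxeterSetup d n) :
    FreeAlgebra ℂ (Ad d ⊕ Fin n) → FreeAlgebra ℂ (Ad d ⊕ Fin n) → Prop
  | add (a b : Ad d) :
      DRel S (FreeAlgebra.ι ℂ (Sum.inl a) + FreeAlgebra.ι ℂ (Sum.inl b))
        (FreeAlgebra.ι ℂ (Sum.inl (a + b)))
  | mul (a b : Ad d) :
      DRel S (FreeAlgebra.ι ℂ (Sum.inl a) * FreeAlgebra.ι ℂ (Sum.inl b))
        (FreeAlgebra.ι ℂ (Sum.inl (a * b)))
  | scalar (c : ℂ) :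
      DRel S (algebraMap ℂ _ c) (FreeAlgebra.ι ℂ (Sum.inl (algebraMap ℂ (Ad d) c)))
  | sq (i : Fin n) :
      DRel S (FreeAlgebra.ι ℂ (Sum.inr i) * FreeAlgebra.ι ℂ (Sum.inr i)) 0
  | straighten (i : Fin n) (θ : Vd d →ₗ[ℂ] ℂ) :
      DRel S (FreeAlgebra.ι ℂ (Sum.inr i) * FreeAlgebra.ι ℂ (Sum.inl (lin θ)))
        (algebraMap ℂ _ (θ (S.coroot i)) +
          FreeAlgebra.ι ℂ (Sum.inl (glAct ((S.s i : S.Γ) : GL (Fin d) ℂ) (lin θ))) *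
            FreeAlgebra.ι ℂ (Sum.inr i))

/-- The Demazure descent algebra `𝔇`. -/
abbrev DD {d n : ℕ} (S : CoxeterSetup d n) := RingQuot (DRel S)

/-- The generator `Gᵢ ∈ 𝔇`. -/
def GG {d n : ℕ} (S : CoxeterSetup d n) (i : Fin n) : DD S :=
  RingQuot.mkRingHom (DRel S) (FreeAlgebra.ι ℂ (Sum.inr i))

/-- The canonical ring homomorphism `A → 𝔇`. -/
def ofA {d n : ℕ} (S : CoxeterSetup d n) : Ad d →+* DD S where
  toFun a := RingQuot.mkRingHom (DRel S) (FreeAlgebra.ι ℂ (Sum.inl a))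
  map_one' := by
    have h := RingQuot.mkRingHom_rel (DRel.scalar (S := S) 1)
    simpa using h.symm
  map_mul' a b := by
    exact ((RingQuot.mkRingHom_rel (DRel.mul (S := S) a b)).symm).trans (map_mul _ _ _)
  map_zero' := by
    have h := RingQuot.mkRingHom_rel (DRel.scalar (S := S) 0)
    simpa using h.symm
  map_add' a b := by
    exact ((RingQuot.mkRingHom_rel (DRel.add (S := S) a b)).symm).trans (map_add _ _ _)

/-- The element `σᵢ := 1 − αᵢ·Gᵢ ∈ 𝔇`. -/
def sigmaD {d n : ℕ} (S : CoxeterSetup d n) (i : Fin n) : DD S :=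
  1 - ofA S (lin (S.α i)) * GG S i

/-- The set of Coxeter braid relators `B_{ij}`. -/
def coxeterBraidSet {d n : ℕ} (S : CoxeterSetup d n) : Set (DD S) :=
  {x | ∃ i j : Fin n, i ≠ j ∧
    x = altProd (sigmaD S i) (sigmaD S j) (mOrd S i j) -
        altProd (sigmaD S j) (sigmaD S i) (mOrd S i j)}

/-- The set of Demazure braid relators `B^D_{ij}`. -/
def demazureBraidSet {d n : ℕ} (S : CoxeterSetup d n) : Set (DD S) :=
  {x | ∃ i j : Fin n, i ≠ j ∧
    x = altProd (GG S i) (GG S j) (mOrd S i j) -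
        altProd (GG S j) (GG S i) (mOrd S i j)}

/-- The product in `𝔇` of the generators `G` along a word. -/
def wordProd {d n : ℕ} (S : CoxeterSetup d n) (w : List (Fin n)) : DD S :=
  (w.map (GG S)).prod

/-- The sequence of roots `α_k, s_k(α_l), s_k s_l(α_k), …` as degree-one polynomials. -/
def rootSeqP {d n : ℕ} (S : CoxeterSetup d n) (k l : Fin n) (j : ℕ) : Ad d :=
  glAct ((altProd (S.s k) (S.s l) j : S.Γ) : GL (Fin d) ℂ)
    (lin (S.α (if Even j then k else l)))

/-- `Δ_{k,l}`, the product of the `m_{kl}` roots `α_k, s_k(α_l), s_k s_l(α_k), …`. -/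
def DeltaP {d n : ℕ} (S : CoxeterSetup d n) (k l : Fin n) : Ad d :=
  ∏ j ∈ Finset.range (mOrd S k l), rootSeqP S k l j


open MvPolynomial in
lemma lin_eval {d : ℕ} (θ : Vd d →ₗ[ℂ] ℂ) (v : Vd d) :
    ∑ j, θ (Pi.single j 1) * v j = θ v := by
  conv_rhs => rw [← (Pi.basisFun ℂ (Fin d)).sum_repr v]
  simp [mul_comm]

lemma lin_sub {d : ℕ} (θ η : Vd d →ₗ[ℂ] ℂ) : lin (θ - η) = lin θ - lin η := by
  simp [lin, sub_smul, Finset.sum_sub_distrib]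

lemma lin_smul {d : ℕ} (c : ℂ) (θ : Vd d →ₗ[ℂ] ℂ) : lin (c • θ) = MvPolynomial.C c * lin θ := by
  simp [lin, ← MvPolynomial.smul_eq_C_mul, Finset.smul_sum, smul_smul]

lemma glAct_lin {d : ℕ} (g : GL (Fin d) ℂ) (θ : Vd d →ₗ[ℂ] ℂ) :
    glAct g (lin θ) = lin (θ ∘ₗ Matrix.mulVecLin ((g⁻¹ : GL (Fin d) ℂ) : Matrix (Fin d) (Fin d) ℂ)) := by
  unfold lin glAct
  simp only [map_sum, map_smul, MvPolynomial.aeval_X, Finset.smul_sum, smul_smul]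
  rw [Finset.sum_comm]
  refine Finset.sum_congr rfl fun j _ => ?_
  rw [← Finset.sum_smul]
  congr 1
  simp only [LinearMap.comp_apply, Matrix.mulVecLin_apply]
  rw [← lin_eval θ]
  simp

lemma glAct_one {d : ℕ} (f : Ad d) : glAct (1 : GL (Fin d) ℂ) f = f := by
  have : glAct (1 : GL (Fin d) ℂ) = AlgHom.id ℂ _ := by
    apply MvPolynomial.algHom_ext
    intro i
    simp [glAct, Matrix.one_apply]
  rw [this]; rfl

lemma glAct_mul {d : ℕ} (g h : GL (Fin d) ℂ) (f : Ad d) :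
    glAct (g * h) f = glAct g (glAct h f) := by
  have : glAct (g * h) = (glAct g).comp (glAct h) := by
    apply MvPolynomial.algHom_ext
    intro i
    simp only [glAct, AlgHom.comp_apply, MvPolynomial.aeval_X, map_sum, map_smul, mul_inv_rev,
      Units.val_mul, Matrix.mul_apply, Finset.smul_sum, smul_smul, Finset.sum_smul]
    rw [Finset.sum_comm]
  rw [this]; rfl

lemma glAct_C {d : ℕ} (g : GL (Fin d) ℂ) (c : ℂ) :
    glAct g (MvPolynomial.C c) = MvPolynomial.C c := by
  simp [glAct]

lemma totalDegree_lin_le {d : ℕ} (θ : Vd d →ₗ[ℂ] ℂ) : (lin θ).totalDegree ≤ 1 := by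
  refine MvPolynomial.totalDegree_finsetSum_le fun j _ => ?_
  exact (MvPolynomial.totalDegree_smul_le _ _).trans (by simp)

lemma totalDegree_lin {d : ℕ} (θ : Vd d →ₗ[ℂ] ℂ) (h : lin θ ≠ 0) : (lin θ).totalDegree = 1 := by
  have : (lin θ).IsHomogeneous 1 := by
    refine MvPolynomial.IsHomogeneous.sum _ _ _ fun j _ => ?_
    rw [MvPolynomial.smul_eq_C_mul]
    exact (MvPolynomial.isHomogeneous_X _ _).C_mul _
  exact this.totalDegree h

lemma constantCoeff_lin {d : ℕ} (θ : Vd d →ₗ[ℂ] ℂ) : MvPolynomial.constantCoeff (lin θ) = 0 := by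
  simp [lin, MvPolynomial.smul_eq_C_mul]

lemma totalDegree_glAct_le {d : ℕ} (g : GL (Fin d) ℂ) (f : Ad d) :
    (glAct g f).totalDegree ≤ f.totalDegree := by
  unfold glAct
  rw [MvPolynomial.aeval_def, MvPolynomial.eval₂_eq']
  refine MvPolynomial.totalDegree_finsetSum_le fun m hm => ?_
  refine (MvPolynomial.totalDegree_mul _ _).trans ?_
  rw [MvPolynomial.algebraMap_eq, MvPolynomial.totalDegree_C, zero_add]
  refine (MvPolynomial.totalDegree_finsetProd _ _).trans ?_
  refine le_trans ?_ (MvPolynomial.le_totalDegree hm)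
  rw [Finsupp.sum_fintype _ _ (by simp)]
  refine Finset.sum_le_sum fun i _ => ?_
  refine (MvPolynomial.totalDegree_pow _ _).trans ?_
  have : (∑ k, ((g⁻¹ : GL (Fin d) ℂ) : Matrix (Fin d) (Fin d) ℂ) i k •
      (MvPolynomial.X k : Ad d)).totalDegree ≤ 1 := by
    refine MvPolynomial.totalDegree_finsetSum_le fun j _ => ?_
    exact (MvPolynomial.totalDegree_smul_le _ _).trans (by simp)
  calc _ ≤ m i * 1 := Nat.mul_le_mul_left _ this
    _ = m i := mul_one _

lemma totalDegree_dem_le {d : ℕ} (a : Vd d →ₗ[ℂ] ℂ) (ha : lin a ≠ 0) (g : GL (Fin d) ℂ)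
    (f f' : Ad d) (h : lin a * f' = f - glAct g f) : f'.totalDegree ≤ f.totalDegree - 1 := by
  by_cases h0 : f' = 0
  · simp [h0]
  have h1 := MvPolynomial.totalDegree_mul_of_isDomain ha h0
  rw [totalDegree_lin a ha, h] at h1
  have h2 := MvPolynomial.totalDegree_sub f (glAct g f)
  have h3 := totalDegree_glAct_le g f
  rw [max_eq_left h3] at h2
  omega

/-- one Demazure step -/
lemma dem_step {A : Type*} [CommRing A] [IsDomain A] [Algebra ℂ A] (s : A →ₐ[ℂ] A) (D : A → A)
    (α x z : A) (hα : α ≠ 0) (hD : ∀ f, α * D f = f - s f) (κ : ℂ)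
    (hx : x - z = algebraMap ℂ A κ * α) (sx : s x = z) (sz : s z = x) (n : ℕ) (c c' : ℂ) (h : A) :
    ∃ h', D (algebraMap ℂ A c * x ^ (n+1) + algebraMap ℂ A c' * z ^ (n+1) + x * z * h) =
      algebraMap ℂ A ((c - c') * κ) * (if n = 0 then 1 else x ^ n + z ^ n) + x * z * h' := by
  obtain ⟨q, hq⟩ : ∃ q, x ^ (n+1) - z ^ (n+1) =
      (x - z) * ((if n = 0 then 1 else x ^ n + z ^ n) + x * z * q) := by
    rcases n with _ | n
    · exact ⟨0, by simp⟩
    · obtain ⟨q, hq⟩ := sub_dvd_pow_sub_pow x z n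
      refine ⟨q, ?_⟩
      simp only [Nat.add_eq_zero_iff, one_ne_zero, and_false, if_false]
      linear_combination x * z * hq
  refine ⟨algebraMap ℂ A ((c - c') * κ) * q + D h, ?_⟩
  apply mul_left_cancel₀ hα
  rw [hD]
  have e := hD h
  simp only [map_add, map_mul, map_pow, sx, sz, AlgHom.commutes, map_sub]
  linear_combination (algebraMap ℂ A c - algebraMap ℂ A c') * hq - x * z * e + (algebraMap ℂ A c - algebraMap ℂ A c') * ((if n = 0 then 1 else x ^ n + z ^ n) + x * z * q) * hx

lemma prod_roots {A : Type*} [CommRing A] [IsDomain A] (ζ : A) (m : ℕ) (hm : 0 < m)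
    (h : IsPrimitiveRoot ζ m) (x y : A) :
    ∏ j ∈ Finset.range m, (x - ζ ^ j * y) = x ^ m - y ^ m := by
  classical
  rw [h.pow_sub_pow_eq_prod_sub_mul x y hm]
  refine Finset.prod_bij (fun j _ => ζ ^ j) ?_ ?_ ?_ ?_
  · intro j _
    rw [Polynomial.mem_nthRootsFinset hm, ← pow_mul, mul_comm, pow_mul, h.pow_eq_one, one_pow]
  · intro i hi j hj hij
    exact h.pow_inj (Finset.mem_range.1 hi) (Finset.mem_range.1 hj) hij
  · intro b hb
    have : NeZero m := ⟨hm.ne'⟩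
    rw [Polynomial.mem_nthRootsFinset hm] at hb
    obtain ⟨i, hi, rfl⟩ := h.eq_pow_of_pow_eq_one hb
    exact ⟨i, Finset.mem_range.2 hi, rfl⟩
  · intros; rfl

open Polynomial in
/-- a finite order operator killed by `(X-1)(X-ζ)(X-ζ⁻¹)` has order dividing that of `ζ` -/
lemma pow_eq_one_of {d : ℕ} (L : Vd d →ₗ[ℂ] Vd d) (N : ℕ) (hN : N ≠ 0) (hL : L ^ N = 1)
    (ζ ξ : ℂ) (hζ : ζ * ξ = 1)
    (hp : aeval L ((X - C 1) * ((X - C ζ) * (X - C ξ)) : ℂ[X]) = 0) (j : ℕ) (hj : ζ ^ j = 1) :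
    L ^ j = 1 := by
  have h1 : minpoly ℂ L ∣ X ^ N - 1 := minpoly.dvd _ _ (by simp [hL])
  have hsq : Squarefree (minpoly ℂ L) :=
    ((X_pow_sub_one_separable_iff.2 (by exact_mod_cast hN)).squarefree).squarefree_of_dvd h1
  have h2 : minpoly ℂ L ∣ (X ^ j - 1) ^ 3 := by
    refine (minpoly.dvd _ _ hp).trans ?_
    have hξ : ξ ^ j = 1 := by
      have := congrArg (· ^ j) hζ
      simpa [mul_pow, hj] using this
    have : ((X ^ j - 1 : ℂ[X])) ^ 3 = (X ^ j - 1) * ((X ^ j - 1) * (X ^ j - 1)) := by ring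
    rw [this]
    refine mul_dvd_mul ?_ (mul_dvd_mul ?_ ?_) <;> rw [dvd_iff_isRoot] <;> simp [hj, hξ]
  rw [hsq.dvd_pow_iff_dvd (by norm_num)] at h2
  have := (minpoly.dvd_iff).1 h2
  simpa [sub_eq_zero] using this

lemma lin_alpha_ne {d n : ℕ} (S : CoxeterSetup d n) (i : Fin n) : lin (S.α i) ≠ 0 := by
  intro h
  have h1 : MvPolynomial.eval (S.coroot i) (lin (S.α i)) = S.α i (S.coroot i) := by
    rw [← lin_eval (S.α i)]
    simp [lin, MvPolynomial.smul_eq_C_mul]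
  rw [h, S.pairing] at h1
  simp at h1

lemma s_sq {d n : ℕ} (S : CoxeterSetup d n) (i : Fin n) : S.s i * S.s i = 1 := by
  apply Subtype.ext
  apply Units.ext
  apply Matrix.mulVec_injective
  funext v
  simp only [Subgroup.coe_mul, Units.val_mul, ← Matrix.mulVec_mulVec, S.refl, Subgroup.coe_one,
    Units.val_one, Matrix.one_mulVec, map_sub, map_smul, S.pairing, smul_eq_mul]
  module

lemma act_lin {d n : ℕ} (S : CoxeterSetup d n) (i : Fin n) (θ : Vd d →ₗ[ℂ] ℂ) :
    glAct ((S.s i : S.Γ) : GL (Fin d) ℂ) (lin θ) =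
      lin θ - MvPolynomial.C (θ (S.coroot i)) * lin (S.α i) := by
  rw [glAct_lin, ← lin_smul, ← lin_sub]
  congr 1
  have h : (((S.s i : S.Γ) : GL (Fin d) ℂ))⁻¹ = ((S.s i : S.Γ) : GL (Fin d) ℂ) := by
    rw [inv_eq_iff_mul_eq_one]
    exact congrArg Subtype.val (s_sq S i)
  rw [h]
  refine LinearMap.ext fun v => ?_
  simp [S.refl, mul_comm]

lemma dem_iter {d n : ℕ} (S : CoxeterSetup d n) (k l : Fin n) (D : Fin n → Ad d → Ad d)
    (hD : ∀ (i : Fin n) (f : Ad d),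
      lin (S.α i) * D i f = f - glAct ((S.s i : S.Γ) : GL (Fin d) ℂ) f)
    (x y : Ad d) (ζ ξ κk κl : ℂ) (hζ : ζ * ξ = 1) (hk0 : κk ≠ 0) (hl0 : κl ≠ 0)
    (hk : x - y = MvPolynomial.C κk * lin (S.α k))
    (hl : x - MvPolynomial.C ζ * y = MvPolynomial.C κl * lin (S.α l))
    (kx : glAct ((S.s k : S.Γ) : GL (Fin d) ℂ) x = y)
    (ky : glAct ((S.s k : S.Γ) : GL (Fin d) ℂ) y = x)
    (lx : glAct ((S.s l : S.Γ) : GL (Fin d) ℂ) x = MvPolynomial.C ζ * y)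
    (ly : glAct ((S.s l : S.Γ) : GL (Fin d) ℂ) y = MvPolynomial.C ξ * x)
    (m : ℕ) (hm : ∀ j, 0 < j → j < m → ζ ^ j ≠ 1) :
    ∀ j, j < m → ∀ (b : Bool) (c : ℂ) (h : Ad d), c ≠ 0 →
      ∃ w : List (Fin n), w.length = j ∧ (∀ t ∈ w, t = k ∨ t = l) ∧ ∃ c' : ℂ, ∃ h' : Ad d, c' ≠ 0 ∧
        w.foldr (fun u x => D u x) (MvPolynomial.C c *
          (if j = 0 then 1 else x ^ j + (if b then y else MvPolynomial.C ζ * y) ^ j) + x * y * h) =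
        MvPolynomial.C c' + x * y * h' := by
  have hC : (MvPolynomial.C ζ * MvPolynomial.C ξ : Ad d) = 1 := by
    rw [← map_mul, hζ, map_one]
  intro j
  induction j with
  | zero =>
    intro _ b c h hc
    exact ⟨[], rfl, by simp, c, h, hc, by simp⟩
  | succ j ih =>
    intro hj b c h hc
    have hne := hm (j+1) (Nat.succ_pos _) hj
    cases b with
    | true =>
      have hξ : ξ ^ (j+1) ≠ 1 := by
        intro e
        apply hne
        have := congrArg (· ^ (j+1)) hζ
        simpa [mul_pow, e] using this
      obtain ⟨h1, e1⟩ := dem_step (glAct ((S.s l : S.Γ) : GL (Fin d) ℂ)) (D l) (lin (S.α l)) x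
        (MvPolynomial.C ζ * y) (lin_alpha_ne S l) (hD l) κl hl lx
        (by rw [map_mul, glAct_C, ly, ← mul_assoc, hC, one_mul]) j c (c * ξ ^ (j+1))
        (MvPolynomial.C ξ * h)
      obtain ⟨w, hw, hw', c', h', hc', e⟩ := ih (by omega) false ((c - c * ξ ^ (j+1)) * κl)
        (MvPolynomial.C ζ * h1) (mul_ne_zero (fun h0 => hξ (by
          have : c * (1 - ξ ^ (j+1)) = 0 := by linear_combination h0
          rcases mul_eq_zero.1 this with h | h
          · exact absurd h hc
          · linear_combination -h)) hl0)
      refine ⟨w ++ [l], by simp [hw], ?_, c', h', hc', ?_⟩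
      · intro t ht
        rcases List.mem_append.1 ht with ht | ht
        · exact hw' t ht
        · right; simpa using ht
      · rw [List.foldr_append, ← e]
        rw [MvPolynomial.algebraMap_eq] at e1
        have e2 : (MvPolynomial.C ζ * MvPolynomial.C ξ : Ad d) ^ (j+1) = 1 := by rw [hC, one_pow]
        rw [mul_pow] at e2
        have e3 : MvPolynomial.C c * (x ^ (j+1) + y ^ (j+1)) + x * y * h =
            MvPolynomial.C c * x ^ (j+1) + MvPolynomial.C (c * ξ ^ (j+1)) *
              (MvPolynomial.C ζ * y) ^ (j+1) + x * (MvPolynomial.C ζ * y) * (MvPolynomial.C ξ * h) := by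
          simp only [map_mul, map_pow]
          linear_combination (-x * y * h) * hC - MvPolynomial.C c * y ^ (j+1) * e2
        have e4 : x * (MvPolynomial.C ζ * y) * h1 = x * y * (MvPolynomial.C ζ * h1) := by ring
        simp only [List.foldr_cons, List.foldr_nil, Nat.add_eq_zero_iff, one_ne_zero, and_false,
          if_false, if_true, Bool.false_eq_true]
        rw [e3, e1, e4]
    | false =>
      obtain ⟨h1, e1⟩ := dem_step (glAct ((S.s k : S.Γ) : GL (Fin d) ℂ)) (D k) (lin (S.α k)) x
        y (lin_alpha_ne S k) (hD k) κk hk kx ky j c (c * ζ ^ (j+1)) h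
      obtain ⟨w, hw, hw', c', h', hc', e⟩ := ih (by omega) true ((c - c * ζ ^ (j+1)) * κk)
        h1 (mul_ne_zero (fun h0 => hne (by
          have : c * (1 - ζ ^ (j+1)) = 0 := by linear_combination h0
          rcases mul_eq_zero.1 this with h | h
          · exact absurd h hc
          · linear_combination -h)) hk0)
      refine ⟨w ++ [k], by simp [hw], ?_, c', h', hc', ?_⟩
      · intro t ht
        rcases List.mem_append.1 ht with ht | ht
        · exact hw' t ht
        · left; simpa using ht
      · rw [List.foldr_append, ← e]
        rw [MvPolynomial.algebraMap_eq] at e1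
        have e3 : MvPolynomial.C c * (x ^ (j+1) + (MvPolynomial.C ζ * y) ^ (j+1)) + x * y * h =
            MvPolynomial.C c * x ^ (j+1) + MvPolynomial.C (c * ζ ^ (j+1)) *
              y ^ (j+1) + x * y * h := by
          simp only [map_mul, map_pow]
          ring
        simp only [List.foldr_cons, List.foldr_nil, Nat.add_eq_zero_iff, one_ne_zero, and_false,
          if_false, if_true, Bool.false_eq_true]
        rw [e3, e1]

lemma rootSeq_zero {d n : ℕ} (S : CoxeterSetup d n) (k l : Fin n) :
    rootSeqP S k l 0 = lin (S.α k) := by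
  simp [rootSeqP, altProd, glAct_one]

lemma rootSeq_succ {d n : ℕ} (S : CoxeterSetup d n) (k l : Fin n) (j : ℕ) :
    rootSeqP S k l (j+1) = glAct ((S.s k : S.Γ) : GL (Fin d) ℂ) (rootSeqP S l k j) := by
  simp only [rootSeqP, altProd, Subgroup.coe_mul, glAct_mul, Nat.even_add_one, ite_not]

lemma rootSeq_eq {d n : ℕ} (S : CoxeterSetup d n) (k l : Fin n)
    (x y : Ad d) (ζ ξ κk κl : ℂ) (hζ : ζ * ξ = 1) (hk0 : κk ≠ 0) (hl0 : κl ≠ 0)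
    (hk : x - y = MvPolynomial.C κk * lin (S.α k))
    (hl : x - MvPolynomial.C ζ * y = MvPolynomial.C κl * lin (S.α l))
    (kx : glAct ((S.s k : S.Γ) : GL (Fin d) ℂ) x = y)
    (ky : glAct ((S.s k : S.Γ) : GL (Fin d) ℂ) y = x)
    (lx : glAct ((S.s l : S.Γ) : GL (Fin d) ℂ) x = MvPolynomial.C ζ * y)
    (ly : glAct ((S.s l : S.Γ) : GL (Fin d) ℂ) y = MvPolynomial.C ξ * x) (j : ℕ) :
    (∃ c : ℂ, c ≠ 0 ∧ rootSeqP S k l j = MvPolynomial.C c * (x - MvPolynomial.C ξ ^ j * y)) ∧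
    (∃ c : ℂ, c ≠ 0 ∧
      rootSeqP S l k j = MvPolynomial.C c * (x - MvPolynomial.C ζ ^ (j + 1) * y)) := by
  have hC : (MvPolynomial.C ζ * MvPolynomial.C ξ : Ad d) = 1 := by
    rw [← map_mul, hζ, map_one]
  have hζ0 : ζ ≠ 0 := left_ne_zero_of_mul_eq_one hζ
  have hξ0 : ξ ≠ 0 := right_ne_zero_of_mul_eq_one hζ
  induction j with
  | zero =>
    refine ⟨⟨κk⁻¹, inv_ne_zero hk0, ?_⟩, ⟨κl⁻¹, inv_ne_zero hl0, ?_⟩⟩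
    · rw [rootSeq_zero, pow_zero, one_mul, hk, ← mul_assoc, ← map_mul, inv_mul_cancel₀ hk0]; simp
    · rw [rootSeq_zero, zero_add, pow_one, hl, ← mul_assoc, ← map_mul, inv_mul_cancel₀ hl0]; simp
  | succ j ih =>
    obtain ⟨⟨c, hc, e⟩, ⟨c', hc', e'⟩⟩ := ih
    have e2 : (MvPolynomial.C ζ * MvPolynomial.C ξ : Ad d) ^ (j+1) = 1 := by rw [hC, one_pow]
    rw [mul_pow] at e2
    refine ⟨⟨-c' * ζ ^ (j+1), mul_ne_zero (neg_ne_zero.2 hc') (pow_ne_zero _ hζ0), ?_⟩,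
      ⟨-c * ξ ^ (j+1), mul_ne_zero (neg_ne_zero.2 hc) (pow_ne_zero _ hξ0), ?_⟩⟩
    · rw [rootSeq_succ, e']
      simp only [map_mul, map_sub, map_pow, glAct_C, kx, ky, map_neg]
      linear_combination (-MvPolynomial.C c' * y) * e2
    · rw [rootSeq_succ, e]
      simp only [map_mul, map_sub, map_pow, glAct_C, lx, ly, map_neg]
      linear_combination (-MvPolynomial.C c * y * MvPolynomial.C ζ) * e2

open Polynomial in
lemma char_zero {d : ℕ} (α β : Vd d →ₗ[ℂ] ℂ) (u v : Vd d) (hα : α u = 2) (hβ : β v = 2)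
    (L : Vd d →ₗ[ℂ] Vd d) (hL : ∀ w, L w = (w - β w • v) - α (w - β w • v) • u)
    (ζ ξ : ℂ) (h1 : ζ * ξ = 1) (h2 : ζ + ξ = α v * β u - 2) :
    aeval L ((X - C 1) * ((X - C ζ) * (X - C ξ)) : ℂ[X]) = 0 := by
  obtain ⟨t, ht⟩ : ∃ t, t = α v * β u - 2 := ⟨_, rfl⟩
  rw [← ht] at h2
  have e : ((X - C 1) * ((X - C ζ) * (X - C ξ)) : ℂ[X]) =
      (X * X - C t * X + 1) * (X - 1) := by
    have e1 : (C ζ * C ξ : ℂ[X]) = 1 := by rw [← C_mul, h1, C_1]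
    have e2 : (C ζ + C ξ : ℂ[X]) = C t := by rw [← C_add, h2]
    rw [C_1]
    linear_combination (X - 1) * e1 - (X - 1) * X * e2
  rw [e]
  refine LinearMap.ext fun w => ?_
  simp only [map_mul, map_add, map_sub, map_one, aeval_X, aeval_C, Module.End.mul_apply,
    LinearMap.add_apply, LinearMap.sub_apply, Module.End.one_apply, LinearMap.zero_apply,
    Module.algebraMap_end_apply, hL, map_smul, smul_eq_mul, hα, hβ]
  funext i
  simp only [Pi.add_apply, Pi.sub_apply, Pi.smul_apply, smul_eq_mul, Pi.zero_apply]
  rw [ht]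
  ring

lemma exists_xy {d n : ℕ} (S : CoxeterSetup d n) (k l : Fin n) (hr : S.s k * S.s l ≠ 1) :
    ∃ (x y : Ad d) (ζ ξ κk κl : ℂ), ζ * ξ = 1 ∧ κk ≠ 0 ∧ κl ≠ 0 ∧
      x - y = MvPolynomial.C κk * lin (S.α k) ∧
      x - MvPolynomial.C ζ * y = MvPolynomial.C κl * lin (S.α l) ∧
      glAct ((S.s k : S.Γ) : GL (Fin d) ℂ) x = y ∧
      glAct ((S.s k : S.Γ) : GL (Fin d) ℂ) y = x ∧
      glAct ((S.s l : S.Γ) : GL (Fin d) ℂ) x = MvPolynomial.C ζ * y ∧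
      glAct ((S.s l : S.Γ) : GL (Fin d) ℂ) y = MvPolynomial.C ξ * x ∧
      IsPrimitiveRoot ζ (mOrd S k l) ∧ MvPolynomial.constantCoeff x = 0 := by
  have hfin := S.finite
  obtain ⟨a, ha⟩ : ∃ a, a = S.α k (S.coroot l) := ⟨_, rfl⟩
  obtain ⟨b, hb⟩ : ∃ b, b = S.α l (S.coroot k) := ⟨_, rfl⟩
  obtain ⟨ζ, ξ, h1, h2⟩ : ∃ ζ ξ : ℂ, ζ * ξ = 1 ∧ ζ + ξ = a * b - 2 := by
    obtain ⟨t, ht⟩ := IsAlgClosed.exists_pow_nat_eq ((a * b - 2) ^ 2 - 4) (n := 2) (by norm_num)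
    refine ⟨(a * b - 2 + t) / 2, (a * b - 2 - t) / 2, ?_, by ring⟩
    linear_combination (-1/4) * ht
  let L : Vd d →ₗ[ℂ] Vd d := Matrix.toLinAlgEquiv'
    ((((S.s k * S.s l : S.Γ) : GL (Fin d) ℂ)) : Matrix (Fin d) (Fin d) ℂ)
  have hL : ∀ w, L w = (w - S.α l w • S.coroot l) -
      S.α k (w - S.α l w • S.coroot l) • S.coroot k := by
    intro w
    simp only [L, Matrix.toLinAlgEquiv'_apply, Subgroup.coe_mul, Units.val_mul,
      ← Matrix.mulVec_mulVec, S.refl]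
  have hLpow : ∀ j, L ^ j = 1 ↔ (S.s k * S.s l) ^ j = 1 := by
    intro j
    simp only [L]
    rw [← map_pow, map_eq_one_iff _ (AlgEquiv.injective _), ← Units.val_pow_eq_pow_val,
      ← Subgroup.coe_pow, Units.val_eq_one, OneMemClass.coe_eq_one]
  have hmpos : 0 < mOrd S k l := orderOf_pos _
  have hp := char_zero (S.α k) (S.α l) (S.coroot k) (S.coroot l) (S.pairing k) (S.pairing l) L hL
    ζ ξ h1 (by rw [h2, ha, hb])
  have key : ∀ j, ζ ^ j = 1 → (S.s k * S.s l) ^ j = 1 := by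
    intro j hj
    rw [← hLpow]
    exact pow_eq_one_of L _ hmpos.ne' ((hLpow _).2 (pow_orderOf_eq_one _)) ζ ξ h1 hp j hj
  have hζ1 : ζ ≠ 1 := by
    intro h
    exact hr (by simpa using key 1 (by simpa using h))
  -- the vanishing case
  have hM : a * b = 0 → a = 0 ∧ b = 0 := by
    intro h0
    have hz : ζ = -1 := by
      have : (ζ + 1) ^ 2 = 0 := by linear_combination ζ * h2 + ζ * h0 - h1
      linear_combination (pow_eq_zero_iff (two_ne_zero)).1 this
    have hL2 := (hLpow 2).2 (key 2 (by rw [hz]; norm_num))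
    have f1 := fun v => congrArg (S.α k) (LinearMap.congr_fun hL2 v)
    have f2 := fun v => congrArg (S.α l) (LinearMap.congr_fun hL2 v)
    have g1 := f1 (S.coroot l)
    have g2 := f2 (S.coroot k)
    simp only [pow_two, Module.End.mul_apply, hL, Module.End.one_apply, map_sub, map_smul,
      S.pairing, smul_eq_mul, ← ha, ← hb] at g1 g2
    constructor
    · linear_combination (-1/4) * g1 + (1/4) * a * h0
    · linear_combination (1/4) * g2 + (1/4) * (5 * b - a * b ^ 2) * h0
  obtain ⟨u, v, hu, hv, e1, e2⟩ : ∃ u v : ℂ, u ≠ 0 ∧ v ≠ 0 ∧ v * b = u * (1 + ζ) ∧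
      v * (1 + ζ) = ζ * u * a := by
    by_cases h0 : a * b = 0
    · obtain ⟨ha0, hb0⟩ := hM h0
      have hz : ζ = -1 := by
        have : (ζ + 1) ^ 2 = 0 := by linear_combination ζ * h2 + ζ * h0 - h1
        linear_combination (pow_eq_zero_iff (two_ne_zero)).1 this
      exact ⟨1, 1, one_ne_zero, one_ne_zero, by simp [hb0, hz], by simp [ha0, hz]⟩
    · refine ⟨b, 1 + ζ, right_ne_zero_of_mul h0, ?_, by ring, by linear_combination ζ * h2 - h1⟩
      intro hz
      apply h0
      have hz' : ζ = -1 := by linear_combination hz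
      rw [hz'] at h1 h2
      linear_combination -h2 - h1
  have ak : ∀ i, glAct ((S.s i : S.Γ) : GL (Fin d) ℂ) (lin (S.α i)) = - lin (S.α i) := by
    intro i
    rw [act_lin, S.pairing, map_ofNat]; ring
  have akl : glAct ((S.s k : S.Γ) : GL (Fin d) ℂ) (lin (S.α l)) =
    lin (S.α l) - MvPolynomial.C b * lin (S.α k) := by rw [act_lin, hb]
  have alk : glAct ((S.s l : S.Γ) : GL (Fin d) ℂ) (lin (S.α k)) =
    lin (S.α k) - MvPolynomial.C a * lin (S.α l) := by rw [act_lin, ha]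
  have E1 := congrArg (MvPolynomial.C (σ := Fin d)) e1
  have E2 := congrArg (MvPolynomial.C (σ := Fin d)) e2
  have H1 := congrArg (MvPolynomial.C (σ := Fin d)) h1
  simp only [map_mul, map_add, map_one] at E1 E2 H1
  obtain ⟨x, hx⟩ : ∃ x : Ad d, x = MvPolynomial.C (ζ * u) * lin (S.α k) -
    MvPolynomial.C v * lin (S.α l) := ⟨_, rfl⟩
  obtain ⟨y, hy⟩ : ∃ y : Ad d, y = MvPolynomial.C u * lin (S.α k) -
    MvPolynomial.C v * lin (S.α l) := ⟨_, rfl⟩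
  have kx : glAct ((S.s k : S.Γ) : GL (Fin d) ℂ) x = y := by
    rw [hx, hy]
    simp only [map_mul, map_sub, glAct_C, ak, akl]
    linear_combination lin (S.α k) * E1
  have ky : glAct ((S.s k : S.Γ) : GL (Fin d) ℂ) y = x := by
    rw [hx, hy]
    simp only [map_mul, map_sub, glAct_C, ak, akl]
    linear_combination lin (S.α k) * E1
  have lx : glAct ((S.s l : S.Γ) : GL (Fin d) ℂ) x = MvPolynomial.C ζ * y := by
    rw [hx, hy]
    simp only [map_mul, map_sub, glAct_C, ak, alk]
    linear_combination lin (S.α l) * E2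
  have ly : glAct ((S.s l : S.Γ) : GL (Fin d) ℂ) y = MvPolynomial.C ξ * x := by
    have : MvPolynomial.C ξ * (MvPolynomial.C ζ * glAct ((S.s l : S.Γ) : GL (Fin d) ℂ) y) =
        MvPolynomial.C ξ * x := by
      congr 1
      rw [hx, hy]
      simp only [map_mul, map_sub, glAct_C, ak, alk]
      linear_combination lin (S.α l) * E2
    rw [← this]
    linear_combination -(glAct ((S.s l : S.Γ) : GL (Fin d) ℂ) y) * H1
  have hκ : (ζ - 1) * u ≠ 0 := mul_ne_zero (sub_ne_zero.2 hζ1) hu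
  have hxy : x - y = MvPolynomial.C ((ζ - 1) * u) * lin (S.α k) := by
    rw [hx, hy]; simp only [map_mul, map_sub, map_one]; ring
  have hx0 : x ≠ 0 := by
    intro h0
    rw [h0, map_zero] at kx
    rw [h0, ← kx, sub_zero] at hxy
    rcases mul_eq_zero.1 hxy.symm with h | h
    · exact hκ (MvPolynomial.C_injective (Fin d) ℂ (by rw [h, map_zero]))
    · exact lin_alpha_ne S k h
  refine ⟨x, y, ζ, ξ, (ζ - 1) * u, (ζ - 1) * v, h1, hκ, mul_ne_zero (sub_ne_zero.2 hζ1) hv, hxy,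
    ?_, kx, ky, lx, ly, ⟨?_, ?_⟩, ?_⟩
  · rw [hx, hy]; simp only [map_mul, map_sub, map_one]; ring
  · have hpow : ∀ j, glAct (((S.s k * S.s l) ^ j : S.Γ) : GL (Fin d) ℂ) x =
        MvPolynomial.C (ζ ^ j) * x := by
      intro j
      induction j with
      | zero => simp [glAct_one]
      | succ j ih =>
        rw [pow_succ, Subgroup.coe_mul, glAct_mul, Subgroup.coe_mul, glAct_mul, lx, map_mul,
          glAct_C, ky, map_mul, glAct_C, ih, pow_succ, map_mul]
        ring
    have h := hpow (mOrd S k l)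
    rw [mOrd, pow_orderOf_eq_one, Subgroup.coe_one, glAct_one] at h
    have h3 : MvPolynomial.C (ζ ^ mOrd S k l) = (1 : Ad d) := by
      apply mul_right_cancel₀ hx0
      rw [one_mul]; exact h.symm
    rw [← MvPolynomial.C_1] at h3
    exact MvPolynomial.C_injective _ _ h3
  · intro j hj
    exact orderOf_dvd_of_pow_eq_one (key j hj)
  · rw [hx]; simp [constantCoeff_lin]

lemma totalDegree_foldr_le {d n : ℕ} (S : CoxeterSetup d n) (D : Fin n → Ad d → Ad d)
    (hD : ∀ (i : Fin n) (f : Ad d),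
      lin (S.α i) * D i f = f - glAct ((S.s i : S.Γ) : GL (Fin d) ℂ) f) (f : Ad d)
    (w : List (Fin n)) :
    (w.foldr (fun u x => D u x) f).totalDegree ≤ f.totalDegree - w.length := by
  induction w with
  | nil => simp
  | cons i w ih =>
    have := totalDegree_dem_le _ (lin_alpha_ne S i) _ _ _ (hD i (w.foldr (fun u x => D u x) f))
    simp only [List.foldr_cons, List.length_cons]
    omega

lemma totalDegree_DeltaP_le {d n : ℕ} (S : CoxeterSetup d n) (k l : Fin n) :
    (DeltaP S k l).totalDegree ≤ mOrd S k l := by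
  refine (MvPolynomial.totalDegree_finsetProd _ _).trans ?_
  refine (Finset.sum_le_card_nsmul _ _ 1 fun j _ => ?_).trans (by simp)
  exact (totalDegree_glAct_le _ _).trans (totalDegree_lin_le _)

lemma exists_word {d n : ℕ} (S : CoxeterSetup d n)
    (k l : Fin n) (D : Fin n → Ad d → Ad d)
    (hD : ∀ (i : Fin n) (f : Ad d),
      lin (S.α i) * D i f = f - glAct ((S.s i : S.Γ) : GL (Fin d) ℂ) f) :
    ∃ (w : List (Fin n)) (c : ℂ), (∀ x ∈ w, x = k ∨ x = l) ∧ c ≠ 0 ∧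
      w.foldr (fun u x => D u x) (DeltaP S k l) = MvPolynomial.C c := by
  by_cases hr : S.s k * S.s l = 1
  · refine ⟨[k], 2, by simp, two_ne_zero, ?_⟩
    have hm : mOrd S k l = 1 := by rw [mOrd, hr, orderOf_one]
    simp only [DeltaP, hm, Finset.prod_range_one, rootSeq_zero, List.foldr_cons, List.foldr_nil]
    apply mul_left_cancel₀ (lin_alpha_ne S k)
    rw [hD, act_lin, S.pairing]
    ring
  · obtain ⟨x, y, ζ, ξ, κk, κl, h1, hk0, hl0, hk, hl, kx, ky, lx, ly, hprim, hx0⟩ :=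
      exists_xy S k l hr
    have hfin := S.finite
    have hmpos : 0 < mOrd S k l := orderOf_pos _
    obtain ⟨c, hc, hΔ⟩ : ∃ c : ℂ, c ≠ 0 ∧ DeltaP S k l =
        MvPolynomial.C c * (x ^ mOrd S k l - y ^ mOrd S k l) := by
      have hseq := fun j => (rootSeq_eq S k l x y ζ ξ κk κl h1 hk0 hl0 hk hl kx ky lx ly j).1
      choose c hc e using hseq
      refine ⟨∏ j ∈ Finset.range (mOrd S k l), c j, Finset.prod_ne_zero_iff.2 fun j _ => hc j, ?_⟩
      have hξ : IsPrimitiveRoot (MvPolynomial.C ξ : Ad d) (mOrd S k l) := by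
        have : ξ = ζ⁻¹ := eq_inv_of_mul_eq_one_right h1
        rw [this]
        exact hprim.inv.map_of_injective (MvPolynomial.C_injective _ _)
      rw [← prod_roots _ _ hmpos hξ, map_prod, ← Finset.prod_mul_distrib]
      exact Finset.prod_congr rfl fun j _ => e j
    obtain ⟨m, hm⟩ : ∃ m, mOrd S k l = m + 1 := ⟨_, (Nat.succ_pred_eq_of_pos hmpos).symm⟩
    obtain ⟨h', e1⟩ := dem_step (glAct ((S.s k : S.Γ) : GL (Fin d) ℂ)) (D k) (lin (S.α k)) x
        y (lin_alpha_ne S k) (hD k) κk hk kx ky m c (-c) 0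
    have hcc : (c - -c) * κk ≠ 0 := mul_ne_zero (by
      rw [sub_neg_eq_add, ← two_mul]; exact mul_ne_zero two_ne_zero hc) hk0
    obtain ⟨w, hw, hw', c', h'', hc', e⟩ := dem_iter S k l D hD x y ζ ξ κk κl h1 hk0 hl0 hk hl kx
      ky lx ly (m + 1) (fun j hj hj' => hprim.pow_ne_one_of_pos_of_lt hj.ne' (by omega)) m
      (Nat.lt_succ_self m) true ((c - -c) * κk) h' hcc
    have e2 : (w ++ [k]).foldr (fun u x => D u x) (DeltaP S k l) =
        MvPolynomial.C c' + x * y * h'' := by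
      rw [← e, List.foldr_append, hΔ, hm]
      simp only [List.foldr_cons, List.foldr_nil, if_true]
      rw [MvPolynomial.algebraMap_eq] at e1
      rw [← e1]
      have : MvPolynomial.C c * (x ^ (m+1) - y ^ (m+1)) = MvPolynomial.C c * x ^ (m + 1) +
        MvPolynomial.C (-c) * y ^ (m + 1) + x * y * 0 := by
        rw [map_neg]; ring
      rw [this]
    refine ⟨w ++ [k], c', ?_, hc', ?_⟩
    · intro t ht
      rcases List.mem_append.1 ht with ht | ht
      · exact hw' t ht
      · left; simpa using ht
    · have hdeg := totalDegree_foldr_le S D hD (DeltaP S k l) (w ++ [k])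
      have hdeg2 := totalDegree_DeltaP_le S k l
      have hlen : (w ++ [k]).length = m + 1 := by simp [hw]
      have hz := MvPolynomial.totalDegree_eq_zero_iff_eq_C.1
        (show ((w ++ [k]).foldr (fun u x => D u x) (DeltaP S k l)).totalDegree = 0 by omega)
      rw [hz]
      congr 1
      rw [← MvPolynomial.constantCoeff_eq, e2]
      simp [hx0]

/-- For `k ≠ l` there are finitely many compositions `Ξ_t` of the
Demazure operators `D_k, D_l` and polynomials `c_t ∈ ℂ[α_k, α_l]` with
`∑ t, c_t · Ξ_t(Δ_{k,l}) = 1`. -/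
theorem exists_combination_xi_delta_eq_one {d n : ℕ} (S : CoxeterSetup d n)
    (k l : Fin n) (hkl : k ≠ l)
    (D : Fin n → Ad d → Ad d)
    (hD : ∀ (i : Fin n) (f : Ad d),
      lin (S.α i) * D i f = f - glAct ((S.s i : S.Γ) : GL (Fin d) ℂ) f) :
    ∃ (r : ℕ) (Ξ : Fin r → List (Fin n)) (c : Fin r → Ad d),
      (∀ t, ∀ x ∈ Ξ t, x = k ∨ x = l) ∧
      (∀ t, c t ∈ Algebra.adjoin ℂ {lin (S.α k), lin (S.α l)}) ∧
      ∑ t, c t * (Ξ t).foldr (fun u x => D u x) (DeltaP S k l) = 1 := by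
  obtain ⟨w, c, hw, hc, e⟩ := exists_word S k l D hD
  refine ⟨1, fun _ => w, fun _ => MvPolynomial.C c⁻¹, fun _ => hw, fun _ => ?_, ?_⟩
  · exact Subalgebra.algebraMap_mem _ c⁻¹
  · simp only [Finset.univ_unique, Finset.sum_const, Finset.card_singleton, one_smul]
    rw [e, ← map_mul, inv_mul_cancel₀ hc, map_one]
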